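/- arXiv:2201.12884 — 2 statements merged into one kernel-verified Lean document; each statement's English description precedes it below -/
import Mathlib

section
/- Let k ≥ 1 and ℓ ≥ 2k + 1. Then there exists a bijection σ from the k-element subsets of the vertex set of the cycle graph C_{2ℓ} to the k-element subsets of the vertex set of the disjoint union C_ℓ ⊔ C_ℓ such that for every k-element subset M there is a bijection τ : M → σ(M) with the following property: for all x, y ∈ M and each j ∈ {1, 2}, the graph distance between x and y in C_{2ℓ} equals j if and only if τ(x) and τ(y) are connected in C_ℓ ⊔ C_ℓ and their graph distance equals j. -/
/-- The cycle graph on vertex set `ZMod n`: `i` and `j` are adjacent iff `i - j = ±1`. -/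
def cycle (n : ℕ) : SimpleGraph (ZMod n) :=
  SimpleGraph.fromRel (fun i j => i - j = 1)

/-!
Both `C_{2ℓ}` and `C_ℓ ⊔ C_ℓ` are double covers of `C_ℓ`. Cutting `C_{2ℓ}` at a vertex `i` and at
its antipode and closing up each half gives a bijection `C_{2ℓ} → C_ℓ ⊔ C_ℓ` of covers, which can
only disturb distances at most `m` between two vertices when one of them lies over the window of `m`
consecutive vertices of `C_ℓ` starting at the image of `i`. The image in `C_ℓ` of a `k`-element set
misses some such window as soon as `m * k < ℓ`. As a bijection of covers does not change that image,
the cut, once chosen as a function of the image alone, can be recovered from the transported set and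
undone.
-/

open Finset SimpleGraph
open scoped Pointwise

section ExtendedDistance

variable {V W : Type*} {G : SimpleGraph V} {H : SimpleGraph W}

theorem edist_eq_coe_iff_reachable_and_dist_eq {u v : V} {j : ℕ} :
    G.edist u v = j ↔ G.Reachable u v ∧ G.dist u v = j := by
  constructor
  · intro h
    have hr : G.Reachable u v := reachable_of_edist_ne_top (h ▸ ENat.natCast_ne_top j)
    exact ⟨hr, by exact_mod_cast hr.coe_dist_eq_edist.trans h⟩
  · rintro ⟨hr, rfl⟩
    exact hr.coe_dist_eq_edist.symm

theorem edist_hom_le (f : G →g H) (u v : V) : H.edist (f u) (f v) ≤ G.edist u v :=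
  le_iInf fun p => (edist_le (p.map f)).trans_eq (by rw [Walk.length_map])

variable (G) in
/-- The trivial double cover `G ⊔ G → G`. -/
def sumFold : G ⊕g G →g G where
  toFun := Sum.elim id id
  map_rel' {u v} h := by cases u <;> cases v <;> simp_all

theorem edist_sum_self (u v : V ⊕ V) :
    (G ⊕g G).edist u v =
      if u.isLeft = v.isLeft then G.edist (sumFold G u) (sumFold G v) else ⊤ := by
  have fold_le := edist_hom_le (sumFold G) u v
  rcases u with u | u <;> rcases v with v | v
  · exact (edist_hom_le Embedding.sumInl.toHom u v).antisymm fold_le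
  · exact edist_eq_top_of_not_reachable (not_reachable_sum_inl_inr u v)
  · exact edist_eq_top_of_not_reachable fun h => not_reachable_sum_inl_inr v u h.symm
  · exact (edist_hom_le Embedding.sumInr.toHom u v).antisymm fold_le

end ExtendedDistance

section Cycle

variable {n : ℕ}

theorem natAbs_valMinAbs_one_le : (1 : ZMod n).valMinAbs.natAbs ≤ 1 := by
  rcases Nat.eq_zero_or_pos n with rfl | hn
  · rfl
  · have : NeZero n := ⟨hn.ne'⟩
    rw [ZMod.valMinAbs_natAbs_eq_min, ZMod.val_one_eq_one_mod]
    exact (min_le_left _ _).trans (Nat.mod_le 1 n)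

theorem natAbs_valMinAbs_sub_le_one_of_adj {x y : ZMod n} (h : (cycle n).Adj x y) :
    (x - y).valMinAbs.natAbs ≤ 1 := by
  obtain ⟨-, h | h⟩ := (fromRel_adj _ _ _).1 h
  · exact h ▸ natAbs_valMinAbs_one_le
  · rw [← ZMod.natAbs_valMinAbs_neg, neg_sub]
    exact h ▸ natAbs_valMinAbs_one_le

theorem natAbs_valMinAbs_sub_le_length {x y : ZMod n} (p : (cycle n).Walk x y) :
    (x - y).valMinAbs.natAbs ≤ p.length := by
  induction p with
  | nil => simp
  | @cons x z y h p ih =>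
    calc (x - y).valMinAbs.natAbs
        = ((x - z) + (z - y)).valMinAbs.natAbs := by rw [sub_add_sub_cancel]
      _ ≤ ((x - z).valMinAbs + (z - y).valMinAbs).natAbs := ZMod.natAbs_valMinAbs_add_le _ _
      _ ≤ (x - z).valMinAbs.natAbs + (z - y).valMinAbs.natAbs := Int.natAbs_add_le _ _
      _ ≤ 1 + p.length := add_le_add (natAbs_valMinAbs_sub_le_one_of_adj h) ih
      _ = (Walk.cons h p).length := by rw [Walk.length_cons, add_comm]

theorem cycle_edist_add_one_le (x : ZMod n) : (cycle n).edist (x + 1) x ≤ 1 := by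
  rw [edist_le_one_iff_adj_or_eq, cycle, fromRel_adj]
  by_cases h : x + 1 = x <;> simp [h]

theorem cycle_edist_add_natCast_le (x : ZMod n) (d : ℕ) : (cycle n).edist (x + d) x ≤ d := by
  induction d with
  | zero => simp
  | succ d ih =>
    calc (cycle n).edist (x + (d + 1 : ℕ)) x
        ≤ (cycle n).edist (x + d + 1) (x + d) + (cycle n).edist (x + d) x := by
          rw [Nat.cast_succ, ← add_assoc]; exact SimpleGraph.edist_triangle
      _ ≤ 1 + d := add_le_add (cycle_edist_add_one_le _) ih
      _ = (d + 1 : ℕ) := by rw [add_comm, Nat.cast_succ]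

theorem cycle_edist (x y : ZMod n) : (cycle n).edist x y = (x - y).valMinAbs.natAbs := by
  refine le_antisymm ?_ (le_iInf fun p => Nat.cast_le.2 (natAbs_valMinAbs_sub_le_length p))
  have cast_eq : (((x - y).valMinAbs : ℤ) : ZMod n) = x - y := ZMod.coe_valMinAbs _
  obtain h | h := Int.natAbs_eq (x - y).valMinAbs
  · rw [h, Int.cast_natCast] at cast_eq
    have key := cycle_edist_add_natCast_le y (x - y).valMinAbs.natAbs
    rwa [cast_eq, add_sub_cancel] at key
  · rw [h, Int.cast_neg, Int.cast_natCast] at cast_eq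
    have key := cycle_edist_add_natCast_le x (x - y).valMinAbs.natAbs
    rwa [neg_eq_iff_eq_neg.1 cast_eq, neg_sub, add_sub_cancel, SimpleGraph.edist_comm] at key

theorem cycle_edist_sub_right (c x y : ZMod n) :
    (cycle n).edist (x - c) (y - c) = (cycle n).edist x y := by
  rw [cycle_edist, cycle_edist, sub_sub_sub_cancel_right]

theorem cycle_edist_eq_coe_iff {x y : ZMod n} {j : ℕ} :
    (cycle n).edist x y = j ↔ (cycle n).dist x y = j := by
  rw [edist_eq_coe_iff_reachable_and_dist_eq, and_iff_right]
  exact (edist_eq_coe_iff_reachable_and_dist_eq.1 (cycle_edist x y)).1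

theorem cycle_edist_natCast {a b : ℕ} (hba : b ≤ a) (hab : a - b < n) :
    (cycle n).edist (a : ZMod n) b = (min (a - b) (n - (a - b)) : ℕ) := by
  have : NeZero n := ⟨by omega⟩
  rw [cycle_edist, ← Nat.cast_sub hba, ZMod.valMinAbs_natAbs_eq_min, ZMod.val_cast_of_lt hab]

end Cycle

section Cut

variable {ℓ : ℕ}

variable (ℓ) in
/-- The connected double cover `C_{2ℓ} → C_ℓ`, on vertices. -/
def cover : ZMod (2 * ℓ) →+* ZMod ℓ :=
  ZMod.castHom (Dvd.intro_left 2 rfl) (ZMod ℓ)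

/-- The map `C_{2ℓ} → C_ℓ ⊔ C_ℓ` over `C_ℓ` that sends the half of `C_{2ℓ}` starting at `i` to the
left copy of `C_ℓ` and the opposite half to the right copy. -/
def cutMap (i x : ZMod (2 * ℓ)) : ZMod ℓ ⊕ ZMod ℓ :=
  if (x - i).val < ℓ then .inl (cover ℓ x) else .inr (cover ℓ x)

theorem isLeft_cutMap (i x : ZMod (2 * ℓ)) : (cutMap i x).isLeft = decide ((x - i).val < ℓ) := by
  unfold cutMap; split_ifs with h <;> simp [h]

theorem sumFold_cutMap (i x : ZMod (2 * ℓ)) : sumFold (cycle ℓ) (cutMap i x) = cover ℓ x := by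
  unfold cutMap; split_ifs <;> rfl

theorem min_sub_eq_iff_of_le_mod {a b m j : ℕ} (hba : b ≤ a) (ha : a < 2 * ℓ)
    (hma : m ≤ a % ℓ) (hmb : m ≤ b % ℓ) (hj : j ≤ m) :
    min (a - b) (2 * ℓ - (a - b)) = j ↔
      (a < ℓ ↔ b < ℓ) ∧ min (a - b) (ℓ - (a - b)) = j := by
  have mod_eq : ∀ c < 2 * ℓ, c % ℓ = if c < ℓ then c else c - ℓ := by
    intro c hc
    split_ifs with h
    · exact Nat.mod_eq_of_lt h
    · rw [Nat.mod_eq_sub_mod (by omega), Nat.mod_eq_of_lt (by omega)]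
  rw [mod_eq a ha] at hma
  rw [mod_eq b (by omega)] at hmb
  split_ifs at hma hmb <;> omega

variable [NeZero ℓ]

theorem edist_cutMap_eq_coe_iff {i x y : ZMod (2 * ℓ)} {m j : ℕ}
    (hx : m ≤ (cover ℓ (x - i)).val) (hy : m ≤ (cover ℓ (y - i)).val) (hj : j ≤ m) :
    (cycle ℓ ⊕g cycle ℓ).edist (cutMap i x) (cutMap i y) = j ↔ (cycle (2 * ℓ)).edist x y = j := by
  wlog hyx : (y - i).val ≤ (x - i).val generalizing x y
  · rw [SimpleGraph.edist_comm, this hy hx (le_of_not_ge hyx), SimpleGraph.edist_comm]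
  have hxlt := ZMod.val_lt (x - i)
  have cover_sub (z : ZMod (2 * ℓ)) : cover ℓ z - cover ℓ i = ((z - i).val : ZMod ℓ) := by
    rw [← map_sub, ← map_natCast (cover ℓ), ZMod.natCast_zmod_val]
  rw [map_sub, cover_sub, ZMod.val_natCast] at hx hy
  have edist_eq := cycle_edist_natCast hyx ((Nat.sub_le _ _).trans_lt hxlt)
  rw [ZMod.natCast_zmod_val, ZMod.natCast_zmod_val, cycle_edist_sub_right] at edist_eq
  rw [edist_eq, Nat.cast_inj, min_sub_eq_iff_of_le_mod hyx hxlt hx hy hj, edist_sum_self]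
  simp only [isLeft_cutMap, sumFold_cutMap, decide_eq_decide]
  split_ifs with same_half
  · rw [← cycle_edist_sub_right (cover ℓ i), cover_sub, cover_sub,
      cycle_edist_natCast hyx (by omega), Nat.cast_inj, and_iff_right same_half]
  · simp [same_half]

theorem cutMap_injective (i : ZMod (2 * ℓ)) : Function.Injective (cutMap i) := by
  intro x y h
  -- For `m = 0` the window is empty: distance zero is reflected whatever `x` and `y` are.
  have edist_eq : (cycle ℓ ⊕g cycle ℓ).edist (cutMap i x) (cutMap i y) = (0 : ℕ) :=
    edist_eq_zero_iff.2 h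
  exact edist_eq_zero_iff.1 <|
    (edist_cutMap_eq_coe_iff (Nat.zero_le _) (Nat.zero_le _) le_rfl).1 edist_eq

/-- `cutMap` as an equivalence. -/
noncomputable def cutEquiv (i : ZMod (2 * ℓ)) : ZMod (2 * ℓ) ≃ ZMod ℓ ⊕ ZMod ℓ :=
  Equiv.ofBijective (cutMap i) <| (Fintype.bijective_iff_injective_and_card _).2
    ⟨cutMap_injective i, by rw [Fintype.card_sum, ZMod.card, ZMod.card, two_mul]⟩

theorem sumFold_comp_cutEquiv (i : ZMod (2 * ℓ)) : sumFold (cycle ℓ) ∘ cutEquiv i = cover ℓ :=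
  funext (sumFold_cutMap i)

end Cut

section Window

theorem exists_forall_sub_notMem {A : Type*} [AddCommGroup A] [Fintype A]
    {S T : Finset A} (h : #T * #S < Fintype.card A) : ∃ c, ∀ t ∈ T, t - c ∉ S := by
  classical
  have card_lt : #(T - S) < #(univ : Finset A) := card_sub_le.trans_lt h
  obtain ⟨c, -, hc⟩ := exists_mem_notMem_of_card_lt_card card_lt
  exact ⟨c, fun t ht hS => hc (sub_sub_cancel t c ▸ sub_mem_sub ht hS)⟩

theorem exists_forall_le_val_sub {n m : ℕ} [NeZero n] {T : Finset (ZMod n)} (h : #T * m < n) :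
    ∃ c, ∀ t ∈ T, m ≤ (t - c).val := by
  let window : Finset (ZMod n) := (range m).image (↑)
  have card_window : #window ≤ m := card_image_le.trans_eq (card_range m)
  obtain ⟨c, hc⟩ := exists_forall_sub_notMem (S := window) (T := T) <| by
    rw [ZMod.card]
    exact (Nat.mul_le_mul_left _ card_window).trans_lt h
  refine ⟨c, fun t ht => le_of_not_gt fun hlt => hc t ht ?_⟩
  exact mem_image.2 ⟨_, mem_range.2 hlt, ZMod.natCast_zmod_val _⟩

end Window

section FiberwiseTransport

variable {V W A : Type*} [DecidableEq A] {p : V → A} {q : W → A}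

theorem image_map_of_comp_eq {e : V ≃ W} (he : q ∘ e = p) (S : Finset V) :
    (S.map e.toEmbedding).image q = S.image p := by
  subst he
  ext a
  simp only [mem_image, mem_map, exists_exists_and_eq_and]
  rfl

/-- Transport of a finite set `S` along an equivalence over `A` that may depend on the image of `S`
in `A`; it is invertible because the transported set has the same image. -/
def transportOver (e : Finset A → V ≃ W) (he : ∀ T, q ∘ e T = p) (k : ℕ) :
    {S : Finset V // #S = k} ≃ {S : Finset W // #S = k} where
  toFun M := ⟨M.1.map (e (M.1.image p)).toEmbedding, by rw [card_map, M.2]⟩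
  invFun N := ⟨N.1.map (e (N.1.image q)).symm.toEmbedding, by rw [card_map, N.2]⟩
  left_inv M := Subtype.ext <| by
    simp only [image_map_of_comp_eq (he _)]
    exact (e _).finsetCongr.symm_apply_apply M.1
  right_inv N := Subtype.ext <| by
    simp only [image_map_of_comp_eq (((e _).comp_symm_eq _ _).2 (he _).symm)]
    exact (e _).finsetCongr.apply_symm_apply N.1

end FiberwiseTransport

theorem stmt3_general (m k ℓ : ℕ) (hℓ : m * k + 1 ≤ ℓ) :
    ∃ σ : {S : Finset (ZMod (2 * ℓ)) // S.card = k} ≃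
          {S : Finset (ZMod ℓ ⊕ ZMod ℓ) // S.card = k},
      ∀ M : {S : Finset (ZMod (2 * ℓ)) // S.card = k},
        ∃ τ : {x // x ∈ M.1} ≃ {y // y ∈ (σ M).1},
          ∀ x y : {x // x ∈ M.1}, ∀ j ≤ m,
            ((cycle (2 * ℓ)).dist x.1 y.1 = j ↔
              ((cycle ℓ ⊕g cycle ℓ).Reachable (τ x).1 (τ y).1 ∧
                (cycle ℓ ⊕g cycle ℓ).dist (τ x).1 (τ y).1 = j)) := by
  have : NeZero ℓ := ⟨by omega⟩
  have exists_cut (T : Finset (ZMod ℓ)) (hT : #T ≤ k) :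
      ∃ i, ∀ t ∈ T, m ≤ (t - cover ℓ i).val := by
    obtain ⟨c, hc⟩ := exists_forall_le_val_sub <|
      (Nat.mul_le_mul_right m hT).trans_lt (mul_comm m k ▸ hℓ)
    obtain ⟨i, rfl⟩ := ZMod.ringHom_surjective (cover ℓ) c
    exact ⟨i, hc⟩
  choose! cut le_val_sub_cut using exists_cut
  refine ⟨transportOver (fun T => cutEquiv (cut T)) (fun T => sumFold_comp_cutEquiv (cut T)) k,
    fun M => ⟨(cutEquiv (cut (M.1.image (cover ℓ)))).subtypeEquiv fun x =>
      (mem_map' (cutEquiv _).toEmbedding).symm, fun x y j hj => ?_⟩⟩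
  have window (z : {z // z ∈ M.1}) : m ≤ (cover ℓ (z.1 - cut (M.1.image (cover ℓ)))).val := by
    rw [map_sub]
    exact le_val_sub_cut _ (card_image_le.trans_eq M.2) _ (mem_image_of_mem _ z.2)
  rw [← edist_eq_coe_iff_reachable_and_dist_eq, ← cycle_edist_eq_coe_iff]
  exact (edist_cutMap_eq_coe_iff (window x) (window y) hj).symm

/-- For `k ≥ 1` and `ℓ ≥ 2k + 1`, there is a bijection `σ` from the `k`-element subsets of the
vertices of `C_{2ℓ}` to the `k`-element subsets of the vertices of `C_ℓ ⊔ C_ℓ` such that for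
every `k`-element subset `M` there is a bijection `τ : M → σ M` with: for all `x, y ∈ M` and
`j ∈ {1, 2}`, the distance of `x` and `y` in `C_{2ℓ}` equals `j` iff `τ x` and `τ y` are
connected in `C_ℓ ⊔ C_ℓ` and their distance equals `j`. -/
theorem stmt3 (k ℓ : ℕ) (hk : 1 ≤ k) (hℓ : 2 * k + 1 ≤ ℓ) :
    ∃ σ : {S : Finset (ZMod (2 * ℓ)) // S.card = k} ≃
          {S : Finset (ZMod ℓ ⊕ ZMod ℓ) // S.card = k},
      ∀ M : {S : Finset (ZMod (2 * ℓ)) // S.card = k},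
        ∃ τ : {x // x ∈ M.1} ≃ {y // y ∈ (σ M).1},
          ∀ x y : {x // x ∈ M.1}, ∀ j ∈ ({1, 2} : Set ℕ),
            ((cycle (2 * ℓ)).dist x.1 y.1 = j ↔
              ((cycle ℓ ⊕g cycle ℓ).Reachable (τ x).1 (τ y).1 ∧
                (cycle ℓ ⊕g cycle ℓ).dist (τ x).1 (τ y).1 = j)) := by
  obtain ⟨σ, hσ⟩ := stmt3_general 2 k ℓ hℓ
  exact ⟨σ, fun M => (hσ M).imp fun τ hτ x y j hj =>
    hτ x y j (by rcases hj with rfl | rfl <;> decide)⟩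
end

section
/- For every vertex u of the Rook's 4×4 graph, the subgraph induced on the set of neighbours of u is isomorphic to the disjoint union of two triangles C₃ ⊔ C₃. -/
/-- The Rook's 4×4 graph `K₄ □ K₄`: vertices `Fin 4 × Fin 4`, with `(a,b)` adjacent to `(c,d)`
iff (`a = c` and `b ≠ d`) or (`b = d` and `a ≠ c`). -/
def rook : SimpleGraph (Fin 4 × Fin 4) where
  Adj v w := (v.1 = w.1 ∧ v.2 ≠ w.2) ∨ (v.2 = w.2 ∧ v.1 ≠ w.1)
  symm := by
    constructor
    rintro v w (⟨h1, h2⟩ | ⟨h1, h2⟩)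
    exacts [Or.inl ⟨h1.symm, h2.symm⟩, Or.inr ⟨h1.symm, h2.symm⟩]
  loopless := by constructor; rintro v (⟨_, h⟩ | ⟨_, h⟩) <;> exact h rfl

instance : DecidableRel rook.Adj := fun v w =>
  decidable_of_iff ((v.1 = w.1 ∧ v.2 ≠ w.2) ∨ (v.2 = w.2 ∧ v.1 ≠ w.1)) Iff.rfl

/-!
In a box product, a neighbour of `(a, b)` moves exactly one coordinate along an edge, and two
neighbours moving different coordinates are never adjacent. So the neighbourhood of `(a, b)` in
`G □ H` is the disjoint union of the neighbourhoods of `a` in `G` and of `b` in `H`. The rook's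
graph is `K₄ □ K₄`, a neighbourhood in `K₄` is `K₃`, and `K₃ = C₃`.
-/

section BoxProd

open SimpleGraph

variable {α β : Type*} (G : SimpleGraph α) (H : SimpleGraph β)

/-- The neighbours of `x` in `G □ H` as a disjoint union: `inl` moves the first coordinate of `x`
along an edge of `G`, and `inr` moves the second along an edge of `H`. -/
def boxProdNeighbor (x : α × β) :
    G.neighborSet x.1 ⊕ H.neighborSet x.2 → (G □ H).neighborSet x
  | .inl a => ⟨(a, x.2), .inl ⟨a.2, rfl⟩⟩
  | .inr b => ⟨(x.1, b), .inr ⟨b.2, rfl⟩⟩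

theorem boxProdNeighbor_injective (x : α × β) :
    Function.Injective (boxProdNeighbor G H x) := by
  rintro (⟨a, ha⟩ | ⟨b, hb⟩) (⟨a', ha'⟩ | ⟨b', hb'⟩) h <;>
    obtain ⟨h₁, h₂⟩ := Prod.ext_iff.mp (congrArg Subtype.val h)
  · exact congrArg Sum.inl (Subtype.ext h₁)
  · exact absurd h₁ ha.ne'
  · exact absurd h₁ ha'.ne
  · exact congrArg Sum.inr (Subtype.ext h₂)

theorem boxProdNeighbor_surjective (x : α × β) :
    Function.Surjective (boxProdNeighbor G H x) := by
  rintro ⟨⟨a, b⟩, ⟨ha, rfl : x.2 = b⟩ | ⟨hb, rfl : x.1 = a⟩⟩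
  · exact ⟨.inl ⟨a, ha⟩, rfl⟩
  · exact ⟨.inr ⟨b, hb⟩, rfl⟩

theorem boxProd_adj_boxProdNeighbor (x : α × β) (p q : G.neighborSet x.1 ⊕ H.neighborSet x.2) :
    (G □ H).Adj (boxProdNeighbor G H x p) (boxProdNeighbor G H x q) ↔
      (G.induce (G.neighborSet x.1) ⊕g H.induce (H.neighborSet x.2)).Adj p q := by
  rcases p with ⟨a, ha⟩ | ⟨b, hb⟩ <;> rcases q with ⟨a', ha'⟩ | ⟨b', hb'⟩
  · exact boxProd_adj_left
  · simp [boxProdNeighbor, ha.ne', hb'.ne]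
  · simp [boxProdNeighbor, hb.ne', ha'.ne]
  · exact boxProd_adj_right

/-- The neighbourhood of a vertex in `G □ H` is the disjoint union of the neighbourhoods of its
coordinates in `G` and in `H`. -/
noncomputable def induceNeighborSetBoxProdIso (x : α × β) :
    (G □ H).induce ((G □ H).neighborSet x) ≃g
      G.induce (G.neighborSet x.1) ⊕g H.induce (H.neighborSet x.2) :=
  Iso.symm
    { toEquiv := .ofBijective (boxProdNeighbor G H x)
        ⟨boxProdNeighbor_injective G H x, boxProdNeighbor_surjective G H x⟩
      map_rel_iff' := boxProd_adj_boxProdNeighbor G H x _ _ }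

end BoxProd

/-- The neighbourhood of a vertex in a complete graph is complete, on one vertex fewer. The
bijection `e` compares the vertex types without assuming them finite. -/
def induceNeighborSetTopIso {V W : Type*} [DecidableEq V] (e : V ≃ Option W) (a : V) :
    (⊤ : SimpleGraph V).induce ((⊤ : SimpleGraph V).neighborSet a) ≃g (⊤ : SimpleGraph W) :=
  let neighborEquiv : (⊤ : SimpleGraph V).neighborSet a ≃ {b // b ≠ a} :=
    Equiv.subtypeEquivRight fun _ => ne_comm
  { toEquiv := neighborEquiv.trans ((Equiv.optionSubtypeNe a).trans e).removeNone
    map_rel_iff' := by simp }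

theorem cycle_three : cycle 3 = ⊤ := by
  ext i j
  have sub_eq_one : ∀ i j : ZMod 3, i ≠ j → i - j = 1 ∨ j - i = 1 := by decide
  simpa [cycle] using sub_eq_one i j

theorem rook_eq_boxProd : rook = (⊤ : SimpleGraph (Fin 4)) □ (⊤ : SimpleGraph (Fin 4)) := by
  ext v w
  simp only [rook, SimpleGraph.boxProd_adj, SimpleGraph.top_adj]
  tauto

/-- For every vertex `u` of the Rook's 4×4 graph, the subgraph induced on the neighbours of `u`
is isomorphic to the disjoint union of two triangles `C₃ ⊔ C₃`. -/
theorem stmt11 (u : Fin 4 × Fin 4) :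
    Nonempty ((rook.induce (rook.neighborSet u)) ≃g (cycle 3 ⊕g cycle 3)) := by
  rw [rook_eq_boxProd, cycle_three]
  let e : Fin 4 ≃ Option (ZMod 3) := finSuccEquiv 3
  exact ⟨(induceNeighborSetBoxProdIso _ _ u).trans
    (SimpleGraph.Iso.sumCongr (induceNeighborSetTopIso e u.1) (induceNeighborSetTopIso e u.2))⟩
end
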